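/- arXiv:2605.03631 — 4 statements merged into one kernel-verified Lean document; each statement's English description precedes it below -/
import Mathlib

section
/- Let M be the dyadic matrix with signature m : V → 𝔽₂, and suppose the weight of m is odd. Then (i) M is nonsingular (invertible), (ii) M⁻¹ = M, and (iii) M * Mᵀ = 1 (the identity matrix). -/
open Matrix

/-- `V ℓ` is the 𝔽₂-vector space `Fin ℓ → ZMod 2` with bitwise-XOR addition. -/
abbrev V (ℓ : ℕ) := Fin ℓ → ZMod 2

/-!
Over an elementary abelian `2`-group `a + b = a - b`, so a dyadic matrix is a symmetric circulant
matrix, that is, multiplication by `∑ a, m a • [a]` in the group algebra. In characteristic two,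
squaring is additive, so this element squares to `∑ a, m a ^ 2 • [a + a] = (∑ a, m a) ^ 2 • [0]`;
an odd-weight signature over `𝔽₂` sums to `1`.
-/

section Circulant

variable {G R : Type*} [AddCommGroup G] [Fintype G] [DecidableEq G] [CommSemiring R] [CharP R 2]

-- The involution `a ↦ c - a` pairs equal summands of the convolution, so in characteristic two only
-- its fixed points, the solutions of `a + a = c`, contribute.
theorem circulant_mulVec_self_apply (m : G → R) (c : G) :
    (circulant m *ᵥ m) c = (∑ a with a + a = c, m a) ^ 2 := by
  have hfixed : ∑ a with a + a = c, m (c - a) * m a = ∑ a with a + a = c, m a ^ 2 := by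
    refine Finset.sum_congr rfl fun a ha => ?_
    rw [sub_eq_of_eq_add (Finset.mem_filter.mp ha).2.symm, sq]
  have hpaired : ∑ a with a + a ≠ c, m (c - a) * m a = 0 := by
    refine Finset.sum_involution (fun a _ => c - a) (fun a _ => ?_) (fun a ha _ h => ?_)
      (fun a ha => ?_) (fun a _ => sub_sub_cancel c a)
    · rw [sub_sub_cancel, mul_comm (m a), CharTwo.add_self_eq_zero]
    · exact (Finset.mem_filter.mp ha).2 (sub_eq_iff_eq_add.mp h).symm
    · refine Finset.mem_filter.mpr ⟨Finset.mem_univ _, fun h => (Finset.mem_filter.mp ha).2 ?_⟩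
      rwa [sub_add_sub_comm, sub_eq_iff_eq_add, add_right_inj, eq_comm] at h
  calc (circulant m *ᵥ m) c = ∑ a, m (c - a) * m a := rfl
    _ = ∑ a with a + a = c, m a ^ 2 := by
      rw [← Finset.sum_filter_add_sum_filter_not _ (fun a => a + a = c), hfixed, hpaired, add_zero]
    _ = (∑ a with a + a = c, m a) ^ 2 := (CharTwo.sum_sq _ _).symm

theorem circulant_mul_self_eq_scalar [Module (ZMod 2) G] (m : G → R) :
    circulant m * circulant m = scalar G ((∑ a, m a) ^ 2) := by
  rw [circulant_mul, ← circulant_single]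
  congr 1
  ext c
  rw [circulant_mulVec_self_apply]
  simp only [ZModModule.add_self]
  rcases eq_or_ne c 0 with rfl | hc
  · simp only [Finset.filter_true, Pi.single_eq_same]
  · simp only [hc.symm, Finset.filter_false, Finset.sum_empty, Pi.single_eq_of_ne hc, ne_eq,
      OfNat.ofNat_ne_zero, not_false_eq_true, zero_pow]

end Circulant

theorem circulant_isSymm {G R : Type*} [AddCommGroup G] [Module (ZMod 2) G] (m : G → R) :
    (circulant m).IsSymm :=
  circulant_isSymm_iff.mpr fun a => by rw [ZModModule.neg_eq_self]

theorem eq_circulant_of_apply_add {G R : Type*} [AddCommGroup G] [Module (ZMod 2) G]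
    {m : G → R} {M : Matrix G G R} (hM : ∀ a b, M a b = m (a + b)) : M = circulant m := by
  ext a b
  rw [hM, circulant_apply, ZModModule.sub_eq_add]

theorem sum_eq_natCast_card_ne_zero {ι : Type*} (s : Finset ι) (f : ι → ZMod 2) :
    ∑ i ∈ s, f i = (s.filter fun i => f i ≠ 0).card := by
  have hboole (x : ZMod 2) : x = if x ≠ 0 then 1 else 0 := by decide +revert
  rw [← Finset.sum_boole]
  exact Finset.sum_congr rfl fun i _ => hboole (f i)

theorem dyadic_oddWeight_invertible_general {G R : Type*} [AddCommGroup G] [Module (ZMod 2) G]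
    [Fintype G] [DecidableEq G] [CommRing R] [CharP R 2] (m : G → R) (M : Matrix G G R)
    (hM : ∀ a b, M a b = m (a + b)) (hsum : (∑ a, m a) ^ 2 = 1) :
    IsUnit M ∧ M⁻¹ = M ∧ M * Mᵀ = 1 := by
  obtain rfl := eq_circulant_of_apply_add hM
  have hsq : circulant m * circulant m = 1 := by
    rw [circulant_mul_self_eq_scalar, hsum, map_one]
  exact ⟨IsUnit.of_mul_eq_one _ hsq, inv_eq_right_inv hsq, by rw [circulant_isSymm m, hsq]⟩

/-- A dyadic matrix whose signature has odd weight is nonsingular, is its own inverse,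
and satisfies `M * Mᵀ = 1`. -/
theorem dyadic_oddWeight_invertible (ℓ : ℕ) (m : V ℓ → ZMod 2)
    (M : Matrix (V ℓ) (V ℓ) (ZMod 2))
    (hM : ∀ a b, M a b = m (a + b))
    (hodd : Odd (Finset.univ.filter fun v => m v ≠ 0).card) :
    IsUnit M ∧ M⁻¹ = M ∧ M * Mᵀ = 1 :=
  dyadic_oddWeight_invertible_general m M hM <| by
    rw [sum_eq_natCast_card_ne_zero, ZMod.natCast_eq_one_iff_odd.mpr hodd, one_pow]
end

section
/- Let u ≥ 2 and let m : Fin u → (V → 𝔽₂) be signatures, each of the same odd weight v, that are pairwise inequivalent under translation: for all i ≠ j and all s ∈ V, it is not the case that m i x = m j (x + s) for every x ∈ V (in particular the corresponding dyadic blocks are pairwise distinct). Let H : Matrix V (Fin u × V) 𝔽₂ be given by H a (j, b) = m j (a + b), and let C = {c : (Fin u × V) → 𝔽₂ | H.mulVec c = 0}. Then the number of codewords c ∈ C whose weight equals 2v is at least (u choose 2) · 2^(ℓ+1). -/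
/-
Dyadic matrices over a commutative ring of characteristic 2 commute, and each one squares to the
scalar given by the squared sum of its signature. Hence for blocks `Mᵢ`, `Mⱼ` with equal signature
sums both `Mᵢ Mⱼ + Mⱼ Mᵢ` and `Mᵢ Mᵢ + Mⱼ Mⱼ` vanish. Read column by column, the first identity says
that the `s`-th columns of `Mⱼ` and `Mᵢ`, put on blocks `i` and `j`, form a codeword, and the second
that the `s`-th columns of `Mᵢ` and `Mⱼ` do. If the columns of the parity-check matrix are distinct,
the words obtained in this way are distinct too.
-/

open Matrix

section PiSingle

variable {ι M : Type*} [AddZeroClass M]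

lemma single_add_single_ne_zero_iff [DecidableEq ι] {i j k : ι} (hij : i ≠ j) {f g : M}
    (hf : f ≠ 0) (hg : g ≠ 0) :
    (Pi.single i f + Pi.single j g : ι → M) k ≠ 0 ↔ k = i ∨ k = j := by
  simp only [Pi.add_apply, Pi.single_apply]
  split_ifs <;> simp_all

lemma single_add_single_inj_of_lt [LinearOrder ι] {i j i' j' : ι} (hij : i < j) (hij' : i' < j')
    {f g f' g' : M} (hf : f ≠ 0) (hg : g ≠ 0) (hf' : f' ≠ 0) (hg' : g' ≠ 0)
    (h : (Pi.single i f + Pi.single j g : ι → M) = Pi.single i' f' + Pi.single j' g') :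
    i = i' ∧ j = j' ∧ f = f' ∧ g = g' := by
  have hsupp (k : ι) : k = i ∨ k = j ↔ k = i' ∨ k = j' := by
    rw [← single_add_single_ne_zero_iff hij.ne hf hg, h,
      single_add_single_ne_zero_iff hij'.ne hf' hg']
  have hi := (hsupp i).mp (.inl rfl)
  have hj := (hsupp j).mp (.inr rfl)
  have hi' := (hsupp i').mpr (.inl rfl)
  obtain ⟨rfl, rfl⟩ : i = i' ∧ j = j' := by grind
  refine ⟨rfl, rfl, ?_, ?_⟩
  · simpa [hij.ne] using congrFun h i
  · simpa [hij.ne'] using congrFun h j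

end PiSingle

lemma hammingNorm_uncurry {ι κ R : Type*} [Fintype ι] [Fintype κ] [Zero R] [DecidableEq R]
    (c : ι → κ → R) : hammingNorm (Function.uncurry c) = ∑ i, hammingNorm (c i) := by
  simp only [hammingNorm, Finset.card_filter]
  exact Fintype.sum_prod_type _

lemma hammingNorm_comp_equiv {α β R : Type*} [Fintype α] [Fintype β] [Zero R] [DecidableEq R]
    (e : α ≃ β) (f : β → R) : hammingNorm (f ∘ e) = hammingNorm f := by
  simp only [hammingNorm, Finset.card_filter]
  exact e.sum_comp fun x => if f x ≠ 0 then 1 else 0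

section BlockRow

variable {ι κ n R : Type*}

/-- The `j`-th block of a horizontal concatenation `[H₀ | H₁ | ⋯]`, whose columns are indexed by
pairs (block, column within the block). -/
def colBlock (H : Matrix n (ι × κ) R) (j : ι) : Matrix n κ R :=
  H.submatrix id (Prod.mk j)

lemma mulVec_uncurry [Fintype ι] [Fintype κ] [NonUnitalNonAssocSemiring R]
    (H : Matrix n (ι × κ) R) (c : ι → κ → R) :
    H *ᵥ Function.uncurry c = ∑ j, colBlock H j *ᵥ c j := by
  ext a
  simp only [Finset.sum_apply, mulVec, dotProduct, Fintype.sum_prod_type, colBlock,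
    submatrix_apply, id_eq, Function.uncurry_apply_pair]

lemma mulVec_uncurry_single_add_single [DecidableEq ι] [Fintype ι] [Fintype κ]
    [NonUnitalNonAssocSemiring R] (H : Matrix n (ι × κ) R) (i j : ι) (f g : κ → R) :
    H *ᵥ Function.uncurry (Pi.single i f + Pi.single j g) =
      colBlock H i *ᵥ f + colBlock H j *ᵥ g := by
  have hsingle (i : ι) (f : κ → R) :
      ∑ k, colBlock H k *ᵥ (Pi.single i f : ι → κ → R) k = colBlock H i *ᵥ f := by
    rw [Fintype.sum_eq_single i fun k hk => by simp [hk], Pi.single_eq_same]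
  simp only [mulVec_uncurry, Pi.add_apply, mulVec_add, Finset.sum_add_distrib, hsingle]

lemma hammingNorm_uncurry_single_add_single [DecidableEq ι] [Fintype ι] [Fintype κ]
    [AddZeroClass R] [DecidableEq R] {i j : ι} (hij : i ≠ j) (f g : κ → R) :
    hammingNorm (Function.uncurry (Pi.single i f + Pi.single j g : ι → κ → R)) =
      hammingNorm f + hammingNorm g := by
  rw [hammingNorm_uncurry, Fintype.sum_eq_add i j hij fun k hk => by simp [hk.1, hk.2]]
  simp [hij, hij.symm]

end BlockRow

section PairWord

variable {ι κ R : Type*} [LinearOrder ι]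

/-- The word consisting of the `s`-th columns of blocks `i` and `j` of `H`, placed on the two blocks
`i` and `j`. The column of block `i` goes to the smaller of the two positions, so that the ordered
pairs `(i, j)` and `(j, i)` encode the two possible placements. -/
def pairWord [AddZeroClass R] (H : Matrix κ (ι × κ) R) (i j : ι) (s : κ) : ι × κ → R :=
  Function.uncurry (Pi.single (min i j) (H.col (i, s)) + Pi.single (max i j) (H.col (j, s)))

lemma mulVec_pairWord [Fintype ι] [Fintype κ] [Ring R] [CharP R 2] {H : Matrix κ (ι × κ) R}
    (hcomm : ∀ i j, Commute (colBlock H i) (colBlock H j))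
    (hsq : ∀ i j, colBlock H i * colBlock H i = colBlock H j * colBlock H j) (i j : ι) (s : κ) :
    H *ᵥ pairWord H i j s = 0 := by
  have hcol (k l : ι) :
      colBlock H k *ᵥ H.col (l, s) = (colBlock H k * colBlock H l).col s := rfl
  rw [pairWord, mulVec_uncurry_single_add_single, hcol, hcol]
  ext a
  rcases le_total i j with hij | hij
  · rw [min_eq_left hij, max_eq_right hij, hsq i j]
    exact CharTwo.add_self_eq_zero _
  · rw [min_eq_right hij, max_eq_left hij, (hcomm i j).eq]
    exact CharTwo.add_self_eq_zero _

lemma hammingNorm_pairWord [Fintype ι] [Fintype κ] [AddZeroClass R] [DecidableEq R]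
    (H : Matrix κ (ι × κ) R) {i j : ι} (hij : i ≠ j) (s : κ) :
    hammingNorm (pairWord H i j s) = hammingNorm (H.col (i, s)) + hammingNorm (H.col (j, s)) :=
  hammingNorm_uncurry_single_add_single (min_lt_max.mpr hij).ne _ _

lemma pairWord_inj [AddZeroClass R] {H : Matrix κ (ι × κ) R} (hinj : Function.Injective H.col)
    (hne : ∀ p, H.col p ≠ 0) {i j i' j' : ι} (hij : i ≠ j) (hij' : i' ≠ j') {s s' : κ}
    (h : pairWord H i j s = pairWord H i' j' s') : i = i' ∧ j = j' ∧ s = s' := by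
  obtain ⟨-, -, hi, hj⟩ := single_add_single_inj_of_lt (min_lt_max.mpr hij)
    (min_lt_max.mpr hij') (hne _) (hne _) (hne _) (hne _) (Function.uncurry_injective h)
  obtain ⟨hi, hs⟩ := Prod.mk.inj (hinj hi)
  exact ⟨hi, (Prod.mk.inj (hinj hj)).1, hs⟩

end PairWord

lemma ne_zero_of_injective_of_hammingNorm_eq {α κ R : Type*} [Nontrivial α] [Fintype κ] [Zero R]
    [DecidableEq R] {c : α → κ → R} (hinj : Function.Injective c) {v : ℕ}
    (hv : ∀ p, hammingNorm (c p) = v) (p : α) : c p ≠ 0 := by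
  intro hp
  obtain ⟨q, hq⟩ := exists_ne p
  have hv0 : v = 0 := by rw [← hv p, hp, hammingNorm_zero]
  have hcq : c q = 0 := hammingNorm_eq_zero.mp ((hv q).trans hv0)
  exact hq (hinj (hcq.trans hp.symm))

lemma card_offDiag_univ (ι : Type*) [Fintype ι] :
    (Finset.univ : Finset ι).offDiag.card = (Fintype.card ι).choose 2 * 2 := by
  rw [Finset.offDiag_card, Finset.card_univ, Nat.choose_two_right, ← Nat.mul_sub_one,
    Nat.div_two_mul_two_of_even (Nat.even_mul_pred_self _)]

theorem exists_codewords_of_commute_of_mul_self_eq {ι κ R : Type*} [Fintype ι] [Fintype κ] [Ring R]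
    [CharP R 2] [DecidableEq R] {v : ℕ} {H : Matrix κ (ι × κ) R}
    (hcomm : ∀ i j, Commute (colBlock H i) (colBlock H j))
    (hsq : ∀ i j, colBlock H i * colBlock H i = colBlock H j * colBlock H j)
    (hv : ∀ p, hammingNorm (H.col p) = v) (hinj : Function.Injective H.col) :
    ∃ S : Finset (ι × κ → R), S.card = (Fintype.card ι).choose 2 * (2 * Fintype.card κ) ∧
      ∀ c ∈ S, H *ᵥ c = 0 ∧ hammingNorm c = 2 * v := by
  classical
  let _ : LinearOrder ι := LinearOrder.lift' (Fintype.equivFin ι) (Fintype.equivFin ι).injective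
  let T := (Finset.univ : Finset ι).offDiag ×ˢ (Finset.univ : Finset κ)
  have hT {q : (ι × ι) × κ} (hq : q ∈ T) : q.1.1 ≠ q.1.2 := by simpa [T] using hq
  have hword : Set.InjOn (fun q : (ι × ι) × κ => pairWord H q.1.1 q.1.2 q.2) T := by
    rintro ⟨⟨i, j⟩, s⟩ hq ⟨⟨i', j'⟩, s'⟩ hq' h
    have : Nontrivial (ι × κ) := ⟨(i, s), (j, s), by simpa using hT hq⟩
    obtain ⟨rfl, rfl, rfl⟩ := pairWord_inj hinj (ne_zero_of_injective_of_hammingNorm_eq hinj hv)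
      (hT hq) (hT hq') h
    rfl
  refine ⟨T.image fun q => pairWord H q.1.1 q.1.2 q.2, ?_, Finset.forall_mem_image.mpr ?_⟩
  · rw [Finset.card_image_of_injOn hword, Finset.card_product, card_offDiag_univ,
      Finset.card_univ, mul_assoc]
  · intro q hq
    refine ⟨mulVec_pairWord hcomm hsq _ _ _, ?_⟩
    rw [hammingNorm_pairWord H (hT hq), hv, hv, two_mul]

section Dyadic

variable {ι G R : Type*}

/-- The horizontal concatenation of the dyadic matrices with signatures `m j`, over any additive
index set `G`. -/
def dyadicConcat [Add G] (m : ι → G → R) : Matrix G (ι × G) R :=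
  of fun a p => m p.1 (a + p.2)

lemma hammingNorm_col_dyadicConcat [AddGroup G] [Fintype G] [Zero R] [DecidableEq R]
    (m : ι → G → R) (p : ι × G) : hammingNorm ((dyadicConcat m).col p) = hammingNorm (m p.1) :=
  hammingNorm_comp_equiv (Equiv.addRight p.2) (m p.1)

-- `G` is an elementary abelian 2-group: there `a + b = a - b`, so dyadic matrices are circulant.
variable [AddCommGroup G] [Module (ZMod 2) G]

lemma colBlock_dyadicConcat (m : ι → G → R) (j : ι) :
    colBlock (dyadicConcat m) j = circulant (m j) := by
  ext a b
  simp only [colBlock, dyadicConcat, submatrix_apply, id_eq, of_apply, circulant_apply,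
    ZModModule.sub_eq_add]

lemma sum_eq_zero_of_translate_eq [Fintype G] [Semiring R] [CharP R 2] {f : G → R} {s : G}
    (hs : s ≠ 0) (hf : ∀ x, f (x + s) = f x) : ∑ x, f x = 0 :=
  Finset.sum_involution (fun x _ => x + s)
    (fun x _ => by rw [hf, CharTwo.add_self_eq_zero]) (fun x _ _ => by simpa using hs)
    (fun _ _ => Finset.mem_univ _) (fun x _ => by rw [add_assoc, ZModModule.add_self, add_zero])

lemma circulant_mul_self [Fintype G] [DecidableEq G] [CommRing R] [CharP R 2] (f : G → R) :
    circulant f * circulant f = scalar G ((∑ x, f x) ^ 2) := by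
  ext a b
  simp only [mul_apply, circulant_apply, ZModModule.sub_eq_add, scalar_apply, diagonal_apply]
  split_ifs with hab
  · subst hab
    rw [CharTwo.sum_sq]
    exact Fintype.sum_equiv (Equiv.addLeft a) _ _ fun x => by
      rw [Equiv.coe_addLeft, add_comm x a, sq]
  · have hab' : a + b ≠ 0 := by rwa [← ZModModule.sub_eq_add, sub_ne_zero]
    refine sum_eq_zero_of_translate_eq hab' fun x => ?_
    have hleft : a + (x + (a + b)) = x + b := by
      rw [← add_assoc, add_comm a x, ZModModule.add_add_add_cancel]
    have hright : x + (a + b) + b = a + x := by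
      rw [add_assoc, add_assoc, ZModModule.add_self, add_zero, add_comm]
    rw [hleft, hright, mul_comm]

lemma col_dyadicConcat_injective [Fintype G] [Semiring R] [CharP R 2] {m : ι → G → R}
    (hsum : ∀ j, ∑ x, m j x ≠ 0) (hdist : ∀ i j, i ≠ j → ∀ s, ¬ ∀ x, m i x = m j (x + s)) :
    Function.Injective (dyadicConcat m).col := by
  rintro ⟨i, s⟩ ⟨j, t⟩ h
  have htranslate (x : G) : m i x = m j (x + (s + t)) := by
    have hx : m i (x + s + s) = m j (x + s + t) := congrFun h (x + s)
    rwa [add_assoc, ZModModule.add_self, add_zero, add_assoc] at hx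
  obtain rfl : i = j := by_contra fun hij => hdist i j hij _ htranslate
  have hst : s + t = 0 :=
    by_contra fun hst => hsum i (sum_eq_zero_of_translate_eq hst fun x => (htranslate x).symm)
  rw [← ZModModule.sub_eq_add, sub_eq_zero] at hst
  rw [hst]

theorem constructionB_lowWeight_codewords_general [Fintype ι] [Fintype G] [CommRing R] [CharP R 2]
    [DecidableEq R] {v : ℕ} {σ : R} (m : ι → G → R) (hw : ∀ j, hammingNorm (m j) = v)
    (hsum : ∀ j, ∑ x, m j x = σ) (hinj : Function.Injective (dyadicConcat m).col) :
    ∃ S : Finset (ι × G → R), S.card = (Fintype.card ι).choose 2 * (2 * Fintype.card G) ∧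
      ∀ c ∈ S, dyadicConcat m *ᵥ c = 0 ∧ hammingNorm c = 2 * v := by
  classical
  refine exists_codewords_of_commute_of_mul_self_eq (fun i j => ?_) (fun i j => ?_) (fun p => ?_)
    hinj
  · simp only [colBlock_dyadicConcat]
    exact circulant_mul_comm _ _
  · simp only [colBlock_dyadicConcat, circulant_mul_self, hsum]
  · rw [hammingNorm_col_dyadicConcat, hw]

end Dyadic

lemma sum_eq_natCast_hammingNorm {α : Type*} [Fintype α] (f : α → ZMod 2) :
    ∑ x, f x = hammingNorm f := by
  have hbit : ∀ z : ZMod 2, z = if z ≠ 0 then 1 else 0 := by decide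
  rw [hammingNorm, ← Finset.sum_boole]
  exact Finset.sum_congr rfl fun x _ => hbit (f x)

/-- If the `u ≥ 2` dyadic blocks of `H` have pairwise translation-inequivalent signatures
of common odd weight `v`, the code with parity-check matrix `H` contains at least
`(u choose 2) · 2^(ℓ+1)` codewords of weight `2v`. -/
theorem constructionB_lowWeight_codewords (ℓ u v : ℕ) (hu : 2 ≤ u)
    (m : Fin u → V ℓ → ZMod 2)
    (hw : ∀ j : Fin u, (Finset.univ.filter fun x => m j x ≠ 0).card = v)
    (hv : Odd v)
    (hdist : ∀ i j : Fin u, i ≠ j → ∀ s : V ℓ, ¬ (∀ x, m i x = m j (x + s)))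
    (H : Matrix (V ℓ) (Fin u × V ℓ) (ZMod 2))
    (hH : ∀ (a : V ℓ) (j : Fin u) (b : V ℓ), H a (j, b) = m j (a + b)) :
    u.choose 2 * 2 ^ (ℓ + 1) ≤
      (Finset.univ.filter fun c : (Fin u × V ℓ) → ZMod 2 =>
        H.mulVec c = 0 ∧ (Finset.univ.filter fun p => c p ≠ 0).card = 2 * v).card := by
  obtain rfl : H = dyadicConcat m := by
    ext a ⟨j, b⟩
    exact hH a j b
  have hsum (j : Fin u) : ∑ x, m j x = 1 := by
    rw [sum_eq_natCast_hammingNorm, ZMod.natCast_eq_one_iff_odd, hammingNorm, hw]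
    exact hv
  have hinj : Function.Injective (dyadicConcat m).col :=
    col_dyadicConcat_injective (fun j => by simp [hsum]) hdist
  obtain ⟨S, hcard, hS⟩ := constructionB_lowWeight_codewords_general m hw hsum hinj
  calc u.choose 2 * 2 ^ (ℓ + 1) = S.card := by
        rw [hcard, Fintype.card_fin, Fintype.card_fun, ZMod.card, Fintype.card_fin, pow_succ']
    _ ≤ _ := Finset.card_le_card fun c hc => by
        rw [Finset.mem_filter]
        exact ⟨Finset.mem_univ c, hS c hc⟩
end

section
/- Let u ≥ 2 and let m : Fin u → (V → 𝔽₂) be signatures each of odd weight, let M_j denote the dyadic matrix with signature m j, and let H : Matrix V (Fin u × V) 𝔽₂ be given by H a (j, b) = m j (a + b). Define G : Matrix (Fin (u−1) × V) (Fin u × V) 𝔽₂ in systematic form by: for block columns j < u−1, the (i, j) block of G is the identity matrix if i = j and the zero matrix otherwise, while the (i, u−1) block of G equals M_{u−1} * M_i. Then the code {c : (Fin u × V) → 𝔽₂ | H.mulVec c = 0} equals the 𝔽₂-linear span of the rows of G; that is, G is a generator matrix of the code with parity-check matrix H. -/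
/-! Over a group of exponent two the dyadic matrices are the symmetric circulant matrices, so they
commute. Squaring one of them in characteristic two cancels the off-diagonal entries in pairs and
leaves the square of the sum of the signature on the diagonal; hence a signature of odd weight gives
an involution. It follows that the last block of a codeword is determined by the others, and that
`H * Gᵀ = 0`, since the `i`-th block of this product is `M_i + M_{u-1} (M_{u-1} M_i)ᵀ = 2 M_i`. -/

open Matrix

/-- `info` plays the role of an information set of the code with parity-check matrix `H`. -/
theorem mulVec_eq_zero_iff_mem_span_of_submatrix_eq_one {R r k n : Type*} [CommRing R] [Finite k]
    [DecidableEq k] [Fintype n] {H : Matrix r n R} {G : Matrix k n R} {info : k → n}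
    (hG : G.submatrix id info = 1) (hHG : H * Gᵀ = 0)
    (h_info : ∀ x, H *ᵥ x = 0 → (∀ i, x (info i) = 0) → x = 0) (c : n → R) :
    H *ᵥ c = 0 ↔ c ∈ Submodule.span R (Set.range fun i => G i) := by
  have := Fintype.ofFinite k
  have h_row (w : k → R) : H *ᵥ (w ᵥ* G) = 0 := by
    rw [← mulVec_transpose, mulVec_mulVec, hHG, zero_mulVec]
  have h_restrict (w : k → R) (i : k) : (w ᵥ* G) (info i) = w i := by
    change (w ᵥ* G.submatrix id info) i = w i
    rw [hG, vecMul_one]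
  rw [Submodule.mem_span_range_iff_exists_fun]
  simp only [← vecMul_eq_sum]
  constructor
  · intro hc
    refine ⟨c ∘ info, sub_eq_zero.mp (h_info _ ?_ fun i => ?_)⟩
    · rw [mulVec_sub, h_row, hc, sub_zero]
    · rw [Pi.sub_apply, h_restrict, Function.comp_apply, sub_self]
  · rintro ⟨w, rfl⟩
    exact h_row w

section BlockMatrix

variable {R r ι l : Type*}

/-- The horizontal concatenation of the blocks `M j`, used for parity-check matrices. -/
def blockRow (M : ι → Matrix r l R) : Matrix r (ι × l) R :=
  Matrix.of fun a p => M p.1 a p.2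

theorem blockRow_mulVec [NonUnitalNonAssocSemiring R] [Fintype ι] [Fintype l]
    (M : ι → Matrix r l R) (c : ι × l → R) :
    blockRow M *ᵥ c = ∑ j, M j *ᵥ fun b => c (j, b) := by
  ext a
  simp only [mulVec, dotProduct, blockRow, of_apply, Fintype.sum_prod_type, Finset.sum_apply]

/-- The systematic generator matrix whose `i`-th block row is the `i`-th block row of the identity
followed by `P i` in the last block column. -/
def systematicBlockMatrix [Zero R] [One R] [DecidableEq l] {n : ℕ} (P : Fin n → Matrix l l R) :
    Matrix (Fin n × l) (Fin (n + 1) × l) R :=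
  Matrix.of fun p q =>
    Fin.lastCases (P p.1 p.2 q.2) (fun j => (1 : Matrix _ _ R) p (j, q.2)) q.1

section Entries

variable [Zero R] [One R] [DecidableEq l] {n : ℕ}
  (P : Fin n → Matrix l l R) (p : Fin n × l) (b : l)

theorem systematicBlockMatrix_castSucc (j : Fin n) :
    systematicBlockMatrix P p (j.castSucc, b) = (1 : Matrix _ _ R) p (j, b) := by
  simp only [systematicBlockMatrix, of_apply, Fin.lastCases_castSucc]

theorem systematicBlockMatrix_last :
    systematicBlockMatrix P p (Fin.last n, b) = P p.1 p.2 b := by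
  simp only [systematicBlockMatrix, of_apply, Fin.lastCases_last]

end Entries

variable [Fintype l] {n : ℕ}

theorem eq_zero_of_blockRow_mulVec_eq_zero [NonUnitalNonAssocSemiring R]
    {M : Fin (n + 1) → Matrix r l R}
    (hM : Function.Injective (M (Fin.last n)).mulVec) {x : Fin (n + 1) × l → R}
    (hx : blockRow M *ᵥ x = 0) (h_init : ∀ (j : Fin n) b, x (j.castSucc, b) = 0) : x = 0 := by
  have h_init_block (j : Fin n) : (fun b => x (j.castSucc, b)) = 0 := funext (h_init j)
  have h_last : (fun b => x (Fin.last n, b)) = 0 := by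
    apply hM
    simpa only [blockRow_mulVec, Fin.sum_univ_castSucc, h_init_block, mulVec_zero,
      Finset.sum_const_zero, zero_add] using hx
  ext ⟨j, b⟩
  exact Fin.lastCases (motive := fun j => x (j, b) = 0) (congrFun h_last b) (h_init · b) j

theorem blockRow_mul_systematicBlockMatrix_transpose [NonAssocSemiring R] [DecidableEq l]
    (M : Fin (n + 1) → Matrix r l R) (P : Fin n → Matrix l l R) :
    blockRow M * (systematicBlockMatrix P)ᵀ =
      blockRow fun i => M i.castSucc + M (Fin.last n) * (P i)ᵀ := by
  ext a ⟨i, b⟩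
  simp only [mul_apply, transpose_apply, blockRow, of_apply, Fintype.sum_prod_type,
    Fin.sum_univ_castSucc, systematicBlockMatrix_castSucc, systematicBlockMatrix_last,
    Matrix.add_apply]
  simp [one_apply, ite_and]

theorem blockRow_mulVec_eq_zero_iff_mem_span [CommRing R] [DecidableEq l]
    {M : Fin (n + 1) → Matrix r l R} {P : Fin n → Matrix l l R}
    (hM : Function.Injective (M (Fin.last n)).mulVec)
    (hP : ∀ i, M i.castSucc + M (Fin.last n) * (P i)ᵀ = 0) (c : Fin (n + 1) × l → R) :
    blockRow M *ᵥ c = 0 ↔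
      c ∈ Submodule.span R (Set.range fun p => systematicBlockMatrix P p) := by
  apply mulVec_eq_zero_iff_mem_span_of_submatrix_eq_one (info := Prod.map Fin.castSucc id)
  · ext p ⟨j, b⟩
    exact systematicBlockMatrix_castSucc P p b j
  · simp only [blockRow_mul_systematicBlockMatrix_transpose, hP]
    rfl
  · intro x hx h_info
    exact eq_zero_of_blockRow_mulVec_eq_zero hM hx fun j b => h_info (j, b)

end BlockMatrix

section Dyadic

variable {R X : Type*}

/-- The dyadic matrix with signature `f`, over an arbitrary index type with an addition. -/
def dyadic [Add X] (f : X → R) : Matrix X X R :=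
  Matrix.of fun a b => f (a + b)

theorem dyadic_transpose [AddCommMagma X] (f : X → R) : (dyadic f)ᵀ = dyadic f := by
  ext a b
  exact congrArg f (add_comm b a)

variable [AddCommGroup X] [Module (ZMod 2) X]

theorem dyadic_eq_circulant (f : X → R) : dyadic f = circulant f := by
  ext a b
  rw [circulant_apply, ZModModule.sub_eq_add]
  rfl

variable [Fintype X]

theorem dyadic_mul_comm [NonUnitalCommSemiring R] (f g : X → R) :
    dyadic f * dyadic g = dyadic g * dyadic f := by
  simp only [dyadic_eq_circulant, circulant_mul_comm]

theorem dyadic_mul_apply [NonUnitalNonAssocSemiring R] (f g : X → R) (a b : X) :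
    (dyadic f * dyadic g) a b = ∑ x, f (a + b + x) * g x := by
  simp only [dyadic_eq_circulant, circulant_mul, circulant_apply, mulVec, dotProduct,
    ZModModule.sub_eq_add]

theorem sum_translate_mul_eq_zero [CommSemiring R] [CharP R 2] (f : X → R) {d : X} (hd : d ≠ 0) :
    ∑ x, f (d + x) * f x = 0 := by
  have h_invol (x : X) : d + (d + x) = x := by rw [← add_assoc, ZModModule.add_self, zero_add]
  refine Finset.sum_involution (fun x _ => d + x) (fun x _ => ?_) (fun x _ _ => ?_)
    (fun _ _ => Finset.mem_univ _) fun x _ => h_invol x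
  · rw [h_invol, mul_comm (f x), CharTwo.add_self_eq_zero]
  · exact mt add_eq_right.mp hd

theorem dyadic_mul_self [CommSemiring R] [CharP R 2] [DecidableEq X] (f : X → R) :
    dyadic f * dyadic f = (∑ x, f x) ^ 2 • (1 : Matrix X X R) := by
  ext a b
  rw [dyadic_mul_apply, Matrix.smul_apply, smul_eq_mul]
  obtain rfl | hab := eq_or_ne a b
  · simp only [ZModModule.add_self, zero_add, one_apply_eq, mul_one, sq, CharTwo.sum_mul_self]
  · have hd : a + b ≠ 0 := by rwa [← ZModModule.sub_eq_add, sub_ne_zero]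
    rw [sum_translate_mul_eq_zero f hd, one_apply_ne hab, mul_zero]

theorem blockRow_dyadic_mulVec_eq_zero_iff [CommRing R] [CharP R 2] [DecidableEq X] {n : ℕ}
    {m : Fin (n + 1) → X → R} (hm : (∑ x, m (Fin.last n) x) ^ 2 = 1) (c : Fin (n + 1) × X → R) :
    blockRow (fun j => dyadic (m j)) *ᵥ c = 0 ↔
      c ∈ Submodule.span R (Set.range fun p => systematicBlockMatrix
        (fun i : Fin n => dyadic (m (Fin.last n)) * dyadic (m i.castSucc)) p) := by
  have h_invol : dyadic (m (Fin.last n)) * dyadic (m (Fin.last n)) = 1 := by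
    rw [dyadic_mul_self, hm, one_smul]
  apply blockRow_mulVec_eq_zero_iff_mem_span
  · exact mulVec_injective_of_isUnit (IsUnit.of_mul_eq_one _ h_invol)
  · intro i
    rw [transpose_mul, dyadic_transpose, dyadic_transpose, dyadic_mul_comm,
      ← Matrix.mul_assoc, h_invol, Matrix.one_mul]
    ext a b
    exact CharTwo.add_self_eq_zero _

end Dyadic

theorem sum_zmod_two_eq_one_iff_odd_card {ι : Type*} [Fintype ι] (f : ι → ZMod 2) :
    ∑ x, f x = 1 ↔ Odd (Finset.univ.filter fun x => f x ≠ 0).card := by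
  have h_bit : ∀ z : ZMod 2, z = if z ≠ 0 then 1 else 0 := by decide
  rw [Finset.sum_congr rfl fun x _ => h_bit (f x), Finset.sum_boole, ZMod.natCast_eq_one_iff_odd]

theorem constructionB_generatorMatrix_general {R X : Type*} [CommRing R] [CharP R 2]
    [AddCommGroup X] [Module (ZMod 2) X] [Fintype X] [DecidableEq X] (u : ℕ) (hu : 0 < u)
    (m : Fin u → X → R) (hm : (∑ x, m ⟨u - 1, by omega⟩ x) ^ 2 = 1)
    (H : Matrix X (Fin u × X) R)
    (hH : ∀ (a : X) (j : Fin u) (b : X), H a (j, b) = m j (a + b))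
    (M : Fin u → Matrix X X R)
    (hM : ∀ (j : Fin u) (a b : X), M j a b = m j (a + b))
    (G : Matrix (Fin (u - 1) × X) (Fin u × X) R)
    (hG : ∀ (i : Fin (u - 1)) (a : X) (j : Fin u) (b : X),
      G (i, a) (j, b) =
        if j.val < u - 1 then (if i.val = j.val ∧ a = b then 1 else 0)
        else (M ⟨u - 1, by omega⟩ * M ⟨i.val, by have := i.isLt; omega⟩) a b)
    (c : Fin u × X → R) :
    H *ᵥ c = 0 ↔ c ∈ Submodule.span R (Set.range fun p => G p) := by
  obtain ⟨n, rfl⟩ : ∃ n, u = n + 1 := ⟨u - 1, by omega⟩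
  change Matrix (Fin n × X) (Fin (n + 1) × X) R at G
  obtain rfl : M = fun j => dyadic (m j) := by
    ext j a b
    exact hM j a b
  obtain rfl : H = blockRow fun j => dyadic (m j) := by
    ext a ⟨j, b⟩
    exact hH a j b
  obtain rfl : G = systematicBlockMatrix
      fun i : Fin n => dyadic (m (Fin.last n)) * dyadic (m i.castSucc) := by
    ext ⟨i, a⟩ ⟨j, b⟩
    rw [hG i a j b]
    cases j using Fin.lastCases with
    | last =>
      rw [systematicBlockMatrix_last]
      exact if_neg (Nat.lt_irrefl n)
    | cast j => simp [systematicBlockMatrix_castSucc, one_apply, Fin.ext_iff]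
  exact blockRow_dyadic_mulVec_eq_zero_iff hm c

/-- The systematic-form matrix `G = [I | (M_{u-1} M_i)ᵀ]` (with blocks `M_{u-1} * M_i`
in the last block column) is a generator matrix of the code with parity-check matrix
`H = [M_0 | ⋯ | M_{u-1}]`, when all signatures have odd weight. -/
theorem constructionB_generatorMatrix (ℓ u : ℕ) (hu : 2 ≤ u)
    (m : Fin u → V ℓ → ZMod 2)
    (hodd : ∀ j : Fin u, Odd (Finset.univ.filter fun x => m j x ≠ 0).card)
    (H : Matrix (V ℓ) (Fin u × V ℓ) (ZMod 2))
    (hH : ∀ (a : V ℓ) (j : Fin u) (b : V ℓ), H a (j, b) = m j (a + b))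
    (M : Fin u → Matrix (V ℓ) (V ℓ) (ZMod 2))
    (hM : ∀ (j : Fin u) (a b : V ℓ), M j a b = m j (a + b))
    (G : Matrix (Fin (u - 1) × V ℓ) (Fin u × V ℓ) (ZMod 2))
    (hG : ∀ (i : Fin (u - 1)) (a : V ℓ) (j : Fin u) (b : V ℓ),
      G (i, a) (j, b) =
        if j.val < u - 1 then (if i.val = j.val ∧ a = b then 1 else 0)
        else (M ⟨u - 1, by omega⟩ * M ⟨i.val, by have := i.isLt; omega⟩) a b) :
    ∀ c : (Fin u × V ℓ) → ZMod 2,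
      H.mulVec c = 0 ↔ c ∈ Submodule.span (ZMod 2) (Set.range fun p => G p) := by
  exact constructionB_generatorMatrix_general u (by omega) m
    (by rw [(sum_zmod_two_eq_one_iff_odd_card _).mpr (hodd _), one_pow]) H hH M hM G hG
end

section
/- Let w, u ≥ 2, let ρ : Fin w → Fin u → V, and let M : Matrix (Fin w × V) (Fin u × V) 𝔽₂ be the w × u array of DPMs with M (i, a) (j, b) = 1 if a + b = ρ i j and 0 otherwise. Suppose that for all i ≠ i' and j ≠ j' one has ρ i j + ρ i j' + ρ i' j + ρ i' j' ≠ 0 (equivalently, every 2 × 2 sub-array of M has girth 8). Then the girth of the Tanner graph of M is either 6 or 8. -/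
/-- The Tanner graph of a binary matrix `H`: `Sum.inl r` and `Sum.inr c` are adjacent
iff `H r c = 1`, and there are no other adjacencies. -/
def tanner {R C : Type*} (H : Matrix R C (ZMod 2)) : SimpleGraph (R ⊕ C) :=
  SimpleGraph.fromRel fun x y =>
    match x, y with
    | Sum.inl r, Sum.inr c => H r c = 1
    | _, _ => False

/-!
Write `s` for the sum of the four shifts in a `2 × 2` sub-array. Going once around the four blocks
of the sub-array moves a row label from `a` to `a + s`. As `s ≠ 0`, four steps never close up, so
no two rows meet in two columns and there is no 4-cycle; as `s + s = 0`, a second lap does close up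
and gives an 8-cycle. A bipartite graph has even girth, which leaves only 6 and 8.
-/

open SimpleGraph

section Girth

variable {α : Type*} {G : SimpleGraph α}

theorem even_girth_of_colorable_two (hG : G.Colorable 2) : Even G.girth := by
  by_cases hcyc : G.IsAcyclic
  · simp [girth_eq_zero.2 hcyc]
  · obtain ⟨x, p, -, hp⟩ := exists_girth_eq_length.2 hcyc
    exact hp ▸ two_colorable_iff_forall_loop_even.1 hG x p

theorem girth_ne_four_of_subsingleton_commonNeighbors
    (hG : ∀ ⦃x z⦄, x ≠ z → (G.commonNeighbors x z).Subsingleton) : G.girth ≠ 4 := by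
  intro h4
  have hcyc : ¬ G.IsAcyclic := fun h => by simp [girth_eq_zero.2 h] at h4
  obtain ⟨x, p, hp, hlen⟩ := exists_girth_eq_length.2 hcyc
  match p, hp, hlen.symm.trans h4 with
  | .cons (v := y) hxy (.cons (v := z) hyz (.cons (v := t) hzt (.cons htx .nil))), hp, _ =>
    have hnodup : [y, z, t, x].Nodup := hp.support_nodup
    have hxz : x ≠ z := by rintro rfl; simp at hnodup
    have hyt : y ≠ t := by rintro rfl; simp at hnodup
    exact hyt (hG hxz ⟨hxy, hyz.symm⟩ ⟨htx.symm, hzt⟩)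

end Girth

section Tanner

variable {R C : Type*} {H : Matrix R C (ZMod 2)}

@[simp]
theorem tanner_adj_inl_inr {r : R} {c : C} :
    (tanner H).Adj (Sum.inl r) (Sum.inr c) ↔ H r c = 1 := by
  simp [tanner]

@[simp]
theorem tanner_adj_inr_inl {r : R} {c : C} :
    (tanner H).Adj (Sum.inr c) (Sum.inl r) ↔ H r c = 1 := by
  simp [tanner]

@[simp]
theorem not_tanner_adj_inl_inl {r r' : R} : ¬ (tanner H).Adj (Sum.inl r) (Sum.inl r') := by
  simp [tanner]

@[simp]
theorem not_tanner_adj_inr_inr {c c' : C} : ¬ (tanner H).Adj (Sum.inr c) (Sum.inr c') := by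
  simp [tanner]

theorem tanner_le_completeBipartiteGraph : tanner H ≤ completeBipartiteGraph R C := by
  rintro (r | c) (r' | c') h <;> simp_all

theorem tanner_colorable_two : (tanner H).Colorable 2 :=
  (CompleteBipartiteGraph.bicoloring R C).colorable.mono_left tanner_le_completeBipartiteGraph

/-- The row-column constraint of coding theory: two distinct rows never both have a `1` in each of
two distinct columns. It rules out 4-cycles in the Tanner graph. -/
def RowColumnConstraint (H : Matrix R C (ZMod 2)) : Prop :=
  ∀ ⦃r r' c c'⦄, H r c = 1 → H r c' = 1 → H r' c = 1 → H r' c' = 1 → r = r' ∨ c = c'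

theorem RowColumnConstraint.subsingleton_commonNeighbors (hH : RowColumnConstraint H)
    ⦃x z : R ⊕ C⦄ (hxz : x ≠ z) : ((tanner H).commonNeighbors x z).Subsingleton := by
  rintro y ⟨hxy, hzy⟩ t ⟨hxt, hzt⟩
  rcases x with r | c <;> rcases z with r' | c' <;> rcases y with p | p <;> rcases t with q | q <;>
    simp only [mem_neighborSet, tanner_adj_inl_inr, tanner_adj_inr_inl, not_tanner_adj_inl_inl,
      not_tanner_adj_inr_inr] at hxy hzy hxt hzt
  · exact congrArg Sum.inr ((hH hxy hxt hzy hzt).resolve_left (hxz <| congrArg Sum.inl ·))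
  · exact congrArg Sum.inl ((hH hxy hzy hxt hzt).resolve_right (hxz <| congrArg Sum.inr ·))

theorem RowColumnConstraint.six_le_girth (hH : RowColumnConstraint H)
    (hcyc : ¬ (tanner H).IsAcyclic) : 6 ≤ (tanner H).girth := by
  have hge : 3 ≤ (tanner H).girth := three_le_girth hcyc
  have hne : (tanner H).girth ≠ 4 :=
    girth_ne_four_of_subsingleton_commonNeighbors hH.subsingleton_commonNeighbors
  obtain ⟨k, hk⟩ := even_girth_of_colorable_two (tanner_colorable_two (H := H))
  omega

end Tanner

section DPMArray

variable {I J G : Type*}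

/-- The sum of the four shifts in the `2 × 2` sub-array on rows `i, i'` and columns `j, j'`. A lap
around its four blocks changes row labels by this amount. -/
def subarraySum [Add G] (ρ : I → J → G) (i i' : I) (j j' : J) : G :=
  ρ i j + ρ i j' + ρ i' j + ρ i' j'

variable [DecidableEq G]

/-- The array whose block `(i, j)` is the permutation matrix of the pairs `(a, b)` with
`a + b = ρ i j`; for `G = V ℓ` these blocks are the dyadic permutation matrices. -/
def dpmArray [Add G] (ρ : I → J → G) : Matrix (I × G) (J × G) (ZMod 2) :=
  Matrix.of fun r c => if r.2 + c.2 = ρ r.1 c.1 then 1 else 0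

variable {ρ : I → J → G} {i i' : I} {j j' : J}

theorem dpmArray_eq_one_iff [Add G] {a b : G} :
    dpmArray ρ (i, a) (j, b) = 1 ↔ a + b = ρ i j := by
  simp [dpmArray]

variable [AddCommGroup G] [Module (ZMod 2) G]

theorem rowColumnConstraint_dpmArray
    (hρ : ∀ i i' j j', i ≠ i' → j ≠ j' → subarraySum ρ i i' j j' ≠ 0) :
    RowColumnConstraint (dpmArray ρ) := by
  rintro ⟨i, a⟩ ⟨i', a'⟩ ⟨j, b⟩ ⟨j', b'⟩ h₁₁ h₁₂ h₂₁ h₂₂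
  rw [dpmArray_eq_one_iff] at h₁₁ h₁₂ h₂₁ h₂₂
  obtain rfl | hi := eq_or_ne i i'
  · exact .inl (Prod.ext rfl (add_right_cancel (h₁₁.trans h₂₁.symm)))
  obtain rfl | hj := eq_or_ne j j'
  · exact .inr (Prod.ext rfl (add_left_cancel (h₁₁.trans h₁₂.symm)))
  have hsum : subarraySum ρ i i' j j' = 0 := calc
    subarraySum ρ i i' j j' = (a + b) + (a + b') + (a' + b) + (a' + b') := by
      rw [h₁₁, h₁₂, h₂₁, h₂₂, subarraySum]
    _ = (a + a' + b + b') + (a + a' + b + b') := by abel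
    _ = 0 := ZModModule.add_self _
  exact absurd hsum (hρ i i' j j' hi hj)

theorem dpmArray_add_right_eq_one (a : G) : dpmArray ρ (i, a) (j, a + ρ i j) = 1 := by
  rw [dpmArray_eq_one_iff, ← add_assoc, ZModModule.add_self, zero_add]

theorem dpmArray_add_left_eq_one (b : G) : dpmArray ρ (i, b + ρ i j) (j, b) = 1 := by
  rw [dpmArray_eq_one_iff, add_right_comm, ZModModule.add_self, zero_add]

theorem dpmArray_eq_one_of_add_eq_subarraySum {a a' : G} (h : a + a' = subarraySum ρ i i' j j') :
    dpmArray ρ (i', a + ρ i j + ρ i' j) (j', a' + ρ i j') = 1 := by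
  rw [dpmArray_eq_one_iff]
  calc
    a + ρ i j + ρ i' j + (a' + ρ i j') = (a + a') + (ρ i j + ρ i' j + ρ i j') := by abel
    _ = ρ i' j' + (ρ i j + ρ i' j + ρ i j') + (ρ i j + ρ i' j + ρ i j') := by
      rw [h, subarraySum]; abel
    _ = ρ i' j' := by rw [add_assoc, ZModModule.add_self, add_zero]

/-- The walk once around the blocks `(i, j)`, `(i', j)`, `(i', j')`, `(i, j')`. Its end label `a'`
is a parameter, constrained by `h`, so that the laps from `a` to `a'` and back compose
definitionally. -/
def subarrayLap {a a' : G} (h : a + a' = subarraySum ρ i i' j j') :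
    (tanner (dpmArray ρ)).Walk (Sum.inl (i, a)) (Sum.inl (i, a')) :=
  .cons (v := Sum.inr (j, a + ρ i j))
    (tanner_adj_inl_inr.2 (dpmArray_add_right_eq_one a)) <|
  .cons (v := Sum.inl (i', a + ρ i j + ρ i' j))
    (tanner_adj_inr_inl.2 (dpmArray_add_left_eq_one (a + ρ i j))) <|
  .cons (v := Sum.inr (j', a' + ρ i j'))
    (tanner_adj_inl_inr.2 (dpmArray_eq_one_of_add_eq_subarraySum h)) <|
  .cons (tanner_adj_inr_inl.2 (dpmArray_add_right_eq_one a')) .nil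

theorem isCycle_append_subarrayLap (hi : i ≠ i') (hj : j ≠ j') {a a' : G} (ha : a ≠ a')
    (h : a + a' = subarraySum ρ i i' j j') :
    ((subarrayLap h).append (subarrayLap ((add_comm a' a).trans h))).IsCycle := by
  rw [Walk.isCycle_iff_isPath_tail_and_le_length, Walk.isPath_def]
  refine ⟨?nodup_support_tail, ?three_le_length⟩
  case nodup_support_tail => simp [subarrayLap, hi, hi.symm, hj, hj.symm, ha, ha.symm]
  case three_le_length => simp [subarrayLap]

end DPMArray

theorem dpmArray_girth_six_or_eight_general {I J G : Type*} [Nontrivial I] [Nontrivial J]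
    [AddCommGroup G] [Module (ZMod 2) G] [DecidableEq G] (ρ : I → J → G)
    (hρ : ∀ i i' j j', i ≠ i' → j ≠ j' → subarraySum ρ i i' j j' ≠ 0) :
    (tanner (dpmArray ρ)).girth = 6 ∨ (tanner (dpmArray ρ)).girth = 8 := by
  obtain ⟨i, i', hi⟩ := exists_pair_ne I
  obtain ⟨j, j', hj⟩ := exists_pair_ne J
  have hs : subarraySum ρ i i' j j' ≠ 0 := hρ i i' j j' hi hj
  have hcycle := isCycle_append_subarrayLap hi hj hs.symm (zero_add _)
  have hle : (tanner (dpmArray ρ)).girth ≤ 8 := girth_le_length hcycle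
  have hge : 6 ≤ (tanner (dpmArray ρ)).girth :=
    (rowColumnConstraint_dpmArray hρ).six_le_girth fun hacyc => hacyc _ hcycle
  obtain ⟨k, hk⟩ := even_girth_of_colorable_two (tanner_colorable_two (H := dpmArray ρ))
  omega

/-- If every `2 × 2` sub-array of a `w × u` array of DPMs has girth `8`
(i.e. `ρ i j + ρ i j' + ρ i' j + ρ i' j' ≠ 0` for `i ≠ i'`, `j ≠ j'`), then the girth of
the Tanner graph of the whole array is `6` or `8`. -/
theorem dpmArray_girth_six_or_eight (ℓ w u : ℕ) (hw : 2 ≤ w) (hu : 2 ≤ u)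
    (ρ : Fin w → Fin u → V ℓ)
    (M : Matrix (Fin w × V ℓ) (Fin u × V ℓ) (ZMod 2))
    (hM : ∀ (i : Fin w) (a : V ℓ) (j : Fin u) (b : V ℓ),
      M (i, a) (j, b) = if a + b = ρ i j then 1 else 0)
    (hno4 : ∀ (i i' : Fin w) (j j' : Fin u), i ≠ i' → j ≠ j' →
      ρ i j + ρ i j' + ρ i' j + ρ i' j' ≠ 0) :
    (tanner M).girth = 6 ∨ (tanner M).girth = 8 := by
  have : Nontrivial (Fin w) := Fin.nontrivial_iff_two_le.2 hw
  have : Nontrivial (Fin u) := Fin.nontrivial_iff_two_le.2 hu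
  obtain rfl : M = dpmArray ρ := Matrix.ext fun ⟨i, a⟩ ⟨j, b⟩ => hM i a j b
  exact dpmArray_girth_six_or_eight_general ρ hno4
end
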